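/- arXiv:1106.5244 — 6 statements merged into one kernel-verified Lean document; each statement's English description precedes it below -/
import Mathlib

section
/- Let f : ℂ → ℂ be holomorphic on the punctured open unit disk 𝔻 ∖ {0}. Then the function z ↦ ‖f z‖² is locally integrable on 𝔻 with respect to the two-dimensional Lebesgue measure (i.e. integrable on every compact subset of 𝔻) if and only if there exists a function g holomorphic on the whole open unit disk 𝔻 with g z = f z for all z ∈ 𝔻 ∖ {0}. -/
open MeasureTheory Metric

open Filter Topology Real in
lemma circle_bound (h : ℂ → ℂ) (z : ℂ) (r : ℝ) (hr : 0 ≤ r)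
    (hd : ∀ w ∈ closedBall z r, DifferentiableAt ℂ h w) :
    ENNReal.ofReal (2 * π) * ‖h z‖ₑ ≤
      ∫⁻ θ in Set.Ioo (-π) π, ‖h (circleMap z r θ)‖ₑ := by
  have h1 : circleAverage h z r = h z := by
    apply circleAverage_of_differentiable_on_off_countable (s := ∅) Set.countable_empty
    · intro w hw
      rw [abs_of_nonneg hr] at hw
      exact (hd w hw).continuousAt.continuousWithinAt
    · intro w hw
      rw [abs_of_nonneg hr] at hw
      exact hd w (ball_subset_closedBall hw.1)
  rw [circleAverage_eq_integral_add (-π)] at h1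
  rw [intervalIntegral.integral_comp_add_right (fun θ => h (circleMap z r θ))] at h1
  have e : 2 * π + -π = π := by ring
  rw [e, zero_add, intervalIntegral.integral_of_le (by linarith [pi_pos]),
    integral_Ioc_eq_integral_Ioo] at h1
  have hpi : (2 * π) ≠ 0 := by positivity
  have h2 : ∫ θ in Set.Ioo (-π) π, h (circleMap z r θ) = (2 * π) • h z := by
    rw [← h1, smul_smul, mul_inv_cancel₀ hpi, one_smul]
  have h3 := enorm_integral_le_lintegral_enorm (μ := volume.restrict (Set.Ioo (-π) π))
    (fun θ => h (circleMap z r θ))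
  rw [h2, enorm_smul, Real.enorm_of_nonneg (by positivity)] at h3
  exact h3

open Filter Topology Real in
lemma area_bound (h : ℂ → ℂ) (z : ℂ) (ρ : ℝ) (hρ : 0 < ρ)
    (hd : ∀ w ∈ closedBall z ρ, DifferentiableAt ℂ h w) :
    ENNReal.ofReal (ρ / 2) * (ENNReal.ofReal (2 * π) * ‖h z‖ₑ) * ENNReal.ofReal (ρ / 2) ≤
      ∫⁻ w in ball z ρ, ‖h w‖ₑ := by
  set F : ℂ → ENNReal := (ball z ρ).indicator (fun w => ‖h w‖ₑ) with hF
  have hFm : Measurable F := by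
    have hc : ContinuousOn (fun w => ‖h w‖ₑ) (ball z ρ) := by
      apply continuous_enorm.comp_continuousOn
      intro w hw
      exact (hd w (ball_subset_closedBall hw)).continuousAt.continuousWithinAt
    classical
    have := hc.measurable_piecewise (g := fun _ => (0 : ENNReal)) continuousOn_const
      isOpen_ball.measurableSet
    rw [hF, ← Set.piecewise_eq_indicator]
    exact this
  have key : ∫⁻ w in ball z ρ, ‖h w‖ₑ = ∫⁻ w, F (z + w) := by
    rw [lintegral_add_left_eq_self F z, hF, lintegral_indicator isOpen_ball.measurableSet]
  rw [key, ← Complex.lintegral_comp_polarCoord_symm (fun w => F (z + w))]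
  have hcm : ∀ p : ℝ × ℝ, z + Complex.polarCoord.symm p = circleMap z p.1 p.2 := by
    intro p
    simp [circleMap, Complex.exp_mul_I]
  simp_rw [hcm]
  rw [polarCoord_target, Measure.volume_eq_prod, ← Measure.prod_restrict, lintegral_prod]
  swap
  · apply Measurable.aemeasurable
    have : Measurable (fun p : ℝ × ℝ => circleMap z p.1 p.2) := by
      unfold circleMap
      fun_prop
    have := hFm.comp this
    exact (measurable_fst.ennreal_ofReal).smul this
  calc _ = ∫⁻ r in Set.Ioo (ρ/2) ρ, ENNReal.ofReal (ρ / 2) * (ENNReal.ofReal (2 * π) * ‖h z‖ₑ) := by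
        rw [setLIntegral_const, Real.volume_Ioo]
        congr 2
        ring
    _ ≤ ∫⁻ r in Set.Ioo (ρ/2) ρ, ∫⁻ θ in Set.Ioo (-π) π,
          ENNReal.ofReal r • F (circleMap z r θ) := by
        apply setLIntegral_mono' measurableSet_Ioo
        intro r hr
        have hr0 : 0 < r := by linarith [hr.1]
        have hFe : ∀ θ, F (circleMap z r θ) = ‖h (circleMap z r θ)‖ₑ := by
          intro θ
          rw [hF, Set.indicator_of_mem]
          rw [mem_ball, mem_sphere.mp (circleMap_mem_sphere z hr0.le θ)]
          exact hr.2
        simp_rw [hFe, smul_eq_mul]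
        rw [lintegral_const_mul' _ _ ENNReal.ofReal_ne_top]
        apply mul_le_mul'
        · exact ENNReal.ofReal_le_ofReal hr.1.le
        · exact circle_bound h z r hr0.le
            (fun w hw => hd w (closedBall_subset_closedBall hr.2.le hw))
    _ ≤ _ := by
        apply lintegral_mono_set
        intro r hr
        have := hr.1
        simp only [Set.mem_Ioi]
        linarith

open Filter Topology Real in
lemma little_o (f : ℂ → ℂ)
    (hf : ∀ z ∈ ball (0 : ℂ) 1 \ {0}, DifferentiableAt ℂ f z)
    (hi : IntegrableOn (fun z : ℂ => ‖f z‖ ^ 2) (closedBall 0 (1/2)) volume) :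
    f =o[𝓝[≠] 0] fun z => z⁻¹ := by
  have hfin : ∫⁻ w in closedBall (0:ℂ) (1/2), ‖f w ^ 2‖ₑ ≠ ⊤ := by
    have := hi.2
    unfold HasFiniteIntegral at this
    have e : ∀ w, ‖‖f w‖ ^ 2‖ₑ = ‖f w ^ 2‖ₑ := by intro w; simp [enorm_pow]
    simp_rw [e] at this
    exact this.ne
  have ht : Tendsto (fun z : ℂ => ∫⁻ w in ball (0:ℂ) (2 * ‖z‖), ‖f w ^ 2‖ₑ
      ∂(volume.restrict (closedBall (0:ℂ) (1/2)))) (𝓝[≠] 0) (𝓝 0) := by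
    apply tendsto_setLIntegral_zero hfin
    refine tendsto_of_tendsto_of_tendsto_of_le_of_le tendsto_const_nhds
      (h := fun z : ℂ => volume (ball (0:ℂ) (2 * ‖z‖))) ?_ (fun _ => zero_le)
      (fun z => Measure.restrict_apply_le _ _)
    simp_rw [Complex.volume_ball]
    have : Continuous (fun z : ℂ => ENNReal.ofReal (2 * ‖z‖) ^ 2 * (NNReal.pi : ENNReal)) := by
      apply ENNReal.continuous_mul_const (by simp) |>.comp
      exact (ENNReal.continuous_pow 2).comp (ENNReal.continuous_ofReal.comp (by fun_prop))
    have := this.tendsto 0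
    rw [show ENNReal.ofReal (2 * ‖(0:ℂ)‖) ^ 2 * (NNReal.pi : ENNReal) = 0 by simp] at this
    exact this.mono_left nhdsWithin_le_nhds
  rw [Asymptotics.isLittleO_iff]
  intro c hc
  have h1 := ht.eventually (gt_mem_nhds (show (0:ENNReal) < ENNReal.ofReal (c^2/8) by
    rw [ENNReal.ofReal_pos]; positivity))
  have h2 : ∀ᶠ z : ℂ in 𝓝[≠] 0, z ∈ ball (0:ℂ) (1/4) :=
    nhdsWithin_le_nhds (ball_mem_nhds _ (by norm_num))
  filter_upwards [h1, h2, self_mem_nhdsWithin] with z hz1 hz2 hz3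
  have hz0 : 0 < ‖z‖ := norm_pos_iff.mpr hz3
  have hz4 : ‖z‖ < 1/4 := by simpa using hz2
  have hb := area_bound (fun w => f w ^ 2) z (‖z‖/2) (by positivity) (by
    intro w hw
    apply DifferentiableAt.pow
    apply hf
    rw [mem_closedBall, dist_eq_norm] at hw
    constructor
    · have := norm_add_le (w - z) z
      simp only [sub_add_cancel] at this
      rw [mem_ball_zero_iff]
      linarith
    · rintro rfl
      simp at hw
      linarith)
  have hs : ∫⁻ w in ball z (‖z‖/2), ‖f w ^ 2‖ₑ ≤ ∫⁻ w in ball (0:ℂ) (2 * ‖z‖), ‖f w ^ 2‖ₑ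
      ∂(volume.restrict (closedBall (0:ℂ) (1/2))) := by
    rw [Measure.restrict_restrict isOpen_ball.measurableSet]
    apply lintegral_mono_set
    intro w hw
    rw [mem_ball, dist_eq_norm] at hw
    have := norm_add_le (w - z) z
    simp only [sub_add_cancel] at this
    constructor
    · rw [mem_ball_zero_iff]; linarith
    · rw [mem_closedBall_zero_iff]; linarith
  have hfinal := (hb.trans hs).trans hz1.le
  rw [← ofReal_norm, ← ENNReal.ofReal_mul (by positivity),
    ← ENNReal.ofReal_mul (by positivity), ← ENNReal.ofReal_mul (by positivity),
    ENNReal.ofReal_le_ofReal_iff (by positivity), norm_pow] at hfinal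
  rw [norm_inv, ← div_eq_mul_inv, le_div_iff₀ hz0]
  apply (sq_le_sq₀ (by positivity) hc.le).mp
  have : 3 * (‖f z‖ * ‖z‖)^2 ≤ π * (‖f z‖ * ‖z‖)^2 := by
    gcongr
    exact pi_gt_three.le
  nlinarith [sq_nonneg (‖f z‖ * ‖z‖)]

/-- A function holomorphic on the punctured unit disk has `‖f‖²` integrable on every
compact subset of the disk iff it extends holomorphically across the origin. -/
theorem stmt_0 (f : ℂ → ℂ)
    (hf : ∀ z ∈ ball (0 : ℂ) 1 \ {0}, DifferentiableAt ℂ f z) :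
    (∀ K ⊆ ball (0 : ℂ) 1, IsCompact K →
        IntegrableOn (fun z : ℂ => ‖f z‖ ^ 2) K volume) ↔
      ∃ g : ℂ → ℂ, (∀ z ∈ ball (0 : ℂ) 1, DifferentiableAt ℂ g z) ∧
        ∀ z ∈ ball (0 : ℂ) 1 \ {0}, g z = f z := by
  constructor
  · intro H
    have ho := little_o f hf (H _ (closedBall_subset_ball (by norm_num))
      (isCompact_closedBall _ _))
    have hball : ball (0:ℂ) 1 ∈ nhds 0 := ball_mem_nhds _ one_pos
    have hconst : (fun _ : ℂ => f 0) =o[nhdsWithin 0 {0}ᶜ] fun z : ℂ => z⁻¹ := by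
      rw [Asymptotics.isLittleO_const_left]
      right
      exact tendsto_norm_inv_nhdsNE_zero_atTop
    have := Complex.differentiableOn_update_limUnder_of_isLittleO hball
      (fun z hz => (hf z hz).differentiableWithinAt) (by simpa using ho.sub hconst)
    refine ⟨_, fun z hz => this.differentiableAt (isOpen_ball.mem_nhds hz), ?_⟩
    intro z hz
    exact Function.update_of_ne hz.2 _ _
  · rintro ⟨g, hg, hgf⟩ K hK hKc
    have h1 : IntegrableOn (fun z : ℂ => ‖g z‖ ^ 2) K volume := by
      apply ContinuousOn.integrableOn_compact hKc
      intro z hz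
      exact ((hg z (hK hz)).continuousAt.norm.pow 2).continuousWithinAt
    refine h1.congr_fun_ae ?_
    have h0 : ∀ᵐ z : ℂ ∂volume, z ≠ 0 := by
      simp [ae_iff]
    filter_upwards [ae_restrict_of_ae h0, ae_restrict_mem hKc.measurableSet] with z hz hzK
    rw [hgf z ⟨hK hzK, hz⟩]
end

section
/- Let ℓ > 0 and c ∈ ℝ, and let F : ℂ → ℂ be a measurable function. Set S = {z ∈ ℂ : 0 < Re z < ℓ and Im z > c} and A = {w ∈ ℂ : 0 < ‖w‖ < exp(−2πc/ℓ)}. Then, as an identity of Lebesgue integrals with values in [0,∞], ∫_S ‖F(exp(2πi z/ℓ))‖² dλ(z) = (ℓ/(2π))² · ∫_A ‖F(w)‖² · ‖w‖⁻² dλ(w), where λ is the two-dimensional Lebesgue measure on ℂ. -/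
open MeasureTheory Real

lemma aux_null : volume {z : ℂ | z.im = 0} = 0 := by
  have h := Measure.addHaar_submodule (volume : Measure ℂ) (LinearMap.ker Complex.imLm) (by
    intro h
    have : Complex.I ∈ LinearMap.ker Complex.imLm := by rw [h]; trivial
    simp at this)
  convert h using 2
  ext z
  simp

lemma aux_det (a : ℂ) :
    |((ContinuousLinearMap.toSpanSingleton ℂ a : ℂ →L[ℂ] ℂ).restrictScalars ℝ).det| = ‖a‖ ^ 2 := by
  have h : ((ContinuousLinearMap.toSpanSingleton ℂ a : ℂ →L[ℂ] ℂ).restrictScalars ℝ).det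
      = Algebra.norm ℝ a := by
    rw [Algebra.norm_apply]
    unfold ContinuousLinearMap.det
    congr 1
    ext x <;> simp [mul_comm]
  rw [h, Algebra.norm_complex_apply, Complex.normSq_eq_norm_sq, abs_of_nonneg (by positivity)]

lemma aux_norm (ℓ : ℝ) (z : ℂ) :
    ‖Complex.exp (2 * (π : ℂ) * Complex.I * z / (ℓ : ℂ))‖ = Real.exp (-(2 * π * z.im) / ℓ) := by
  rw [Complex.norm_exp, Complex.div_ofReal_re]
  simp

/-- Change of variables `w = exp(2πiz/ℓ)` mapping the half-strip
`S = {0 < Re z < ℓ, Im z > c}` onto the punctured disk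
`A = {0 < ‖w‖ < exp(-2πc/ℓ)}`, as an identity of Lebesgue integrals in `[0,∞]`. -/
theorem stmt_1 (ℓ c : ℝ) (hℓ : 0 < ℓ) (F : ℂ → ℂ) (hF : Measurable F) :
    ∫⁻ z in {z : ℂ | 0 < z.re ∧ z.re < ℓ ∧ c < z.im},
        ENNReal.ofReal (‖F (Complex.exp (2 * (π : ℂ) * Complex.I * z / (ℓ : ℂ)))‖ ^ 2) ∂volume
      = ENNReal.ofReal ((ℓ / (2 * π)) ^ 2) *
        ∫⁻ w in {w : ℂ | 0 < ‖w‖ ∧ ‖w‖ < Real.exp (-(2 * π * c) / ℓ)},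
          ENNReal.ofReal (‖F w‖ ^ 2 * ‖w‖⁻¹ ^ 2) ∂volume := by
  have hπ := Real.pi_pos
  have hℓc : (ℓ : ℂ) ≠ 0 := by exact_mod_cast hℓ.ne'
  have hπc : (π : ℂ) ≠ 0 := by exact_mod_cast hπ.ne'
  set S : Set ℂ := {z : ℂ | 0 < z.re ∧ z.re < ℓ ∧ c < z.im} with hS
  set A : Set ℂ := {w : ℂ | 0 < ‖w‖ ∧ ‖w‖ < Real.exp (-(2 * π * c) / ℓ)} with hA
  set f : ℂ → ℂ := fun z => Complex.exp (2 * (π : ℂ) * Complex.I * z / (ℓ : ℂ)) with hf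
  have hSm : MeasurableSet S := by
    apply MeasurableSet.inter (measurableSet_lt measurable_const Complex.measurable_re)
    exact MeasurableSet.inter (measurableSet_lt Complex.measurable_re measurable_const)
      (measurableSet_lt measurable_const Complex.measurable_im)
  have hder : ∀ z, HasDerivAt f (f z * (2 * (π : ℂ) * Complex.I / (ℓ : ℂ))) z := by
    intro z
    have h1 : HasDerivAt (fun z : ℂ => 2 * (π : ℂ) * Complex.I * z / (ℓ : ℂ))
        (2 * (π : ℂ) * Complex.I / (ℓ : ℂ)) z := by
      simpa using ((hasDerivAt_id z).const_mul (2 * (π : ℂ) * Complex.I)).div_const (ℓ : ℂ)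
    exact h1.cexp
  have hinj : Set.InjOn f S := by
    intro x hx y hy hxy
    obtain ⟨n, hn⟩ := Complex.exp_eq_exp_iff_exists_int.mp hxy
    have h2 : x = y + n * ℓ := by
      have hI := Complex.I_ne_zero
      field_simp at hn
      linear_combination hn
    have h3 : x.re = y.re + n * ℓ := by rw [h2]; simp
    have hx1 := hx.1
    have hx2 := hx.2.1
    have hy1 := hy.1
    have hy2 := hy.2.1
    have h4 : (n : ℝ) < 1 := by by_contra! h; nlinarith
    have h5 : (-1 : ℝ) < n := by by_contra! h; nlinarith
    have h6 : n = 0 := by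
      have : n < 1 := by exact_mod_cast h4
      have : -1 < n := by exact_mod_cast h5
      omega
    rw [h2, h6]; simp
  have hsub : f '' S ⊆ A := by
    rintro _ ⟨z, hz, rfl⟩
    refine ⟨by simp [hf], ?_⟩
    simp only [hf]
    rw [aux_norm]
    apply Real.exp_lt_exp.mpr
    have := hz.2.2
    gcongr
  have hsup : A \ f '' S ⊆ {z : ℂ | z.im = 0} := by
    rintro w ⟨hw, hw2⟩
    by_contra him
    simp only [Set.mem_setOf_eq] at him
    apply hw2
    have hw0 : w ≠ 0 := norm_pos_iff.mp hw.1
    have e1 : f (ℓ / (2 * π) * (-Complex.I * Complex.log (-w) + π)) = w := by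
      have : 2 * (π : ℂ) * Complex.I * (ℓ / (2 * π) * (-Complex.I * Complex.log (-w) + π)) / (ℓ : ℂ)
          = Complex.log (-w) + π * Complex.I := by
        field_simp
        linear_combination (-Complex.log (-w)) * Complex.I_sq
      simp only [hf]
      rw [this, Complex.exp_add, Complex.exp_log (neg_ne_zero.mpr hw0), Complex.exp_pi_mul_I]
      ring
    have e0 : (ℓ / (2 * π) * (-Complex.I * Complex.log (-w) + π) : ℂ)
      = ((ℓ / (2 * π) : ℝ) : ℂ) * (-Complex.I * Complex.log (-w) + π) := by push_cast; ring
    have e2 : (ℓ / (2 * π) * (-Complex.I * Complex.log (-w) + π) : ℂ).re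
        = ℓ / (2 * π) * (Complex.arg (-w) + π) := by
      rw [e0, Complex.re_ofReal_mul]; simp [Complex.log_im]
    refine ⟨_, ⟨?_, ?_, ?_⟩, e1⟩
    · rw [e2]
      have := Complex.neg_pi_lt_arg (-w)
      have : 0 < Complex.arg (-w) + π := by linarith
      positivity
    · rw [e2]
      have h1 : Complex.arg (-w) < π := by
        apply lt_of_le_of_ne (Complex.arg_le_pi _)
        intro h
        have := (Complex.arg_eq_pi_iff.mp h).2
        simp at this
        exact him this
      calc ℓ / (2 * π) * (Complex.arg (-w) + π) < ℓ / (2 * π) * (π + π) := by gcongr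
        _ = ℓ := by field_simp; ring
    · have h := hw.2
      rw [← e1] at h
      simp only [hf] at h
      rw [aux_norm, Real.exp_lt_exp, div_lt_div_iff_of_pos_right hℓ, neg_lt_neg_iff] at h
      exact lt_of_mul_lt_mul_left h (by positivity)
  have hae : A =ᵐ[volume] f '' S := by
    apply Filter.EventuallyLE.antisymm
    · exact ae_le_set.mpr (measure_mono_null hsup aux_null)
    · exact Filter.Eventually.of_forall hsub
  rw [setLIntegral_congr hae, lintegral_image_eq_lintegral_abs_det_fderiv_mul volume hSm
    (fun z _ => ((hder z).hasFDerivAt.restrictScalars ℝ).hasFDerivWithinAt) hinj,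
    ← lintegral_const_mul' _ _ ENNReal.ofReal_ne_top]
  congr 1
  ext z
  rw [aux_det, ← ENNReal.ofReal_mul (by positivity), ← ENNReal.ofReal_mul (by positivity)]
  congr 1
  have hfz : ‖f z‖ ≠ 0 := by simp [hf]
  have hn : ‖f z * (2 * (π : ℂ) * Complex.I / (ℓ : ℂ))‖ = ‖f z‖ * (2 * π / ℓ) := by
    simp [abs_of_pos hπ, abs_of_pos hℓ]
  rw [hn]
  change ‖F (f z)‖ ^ 2 = _
  field_simp
end

section
/- Let ℓ > 0, c ≥ 1 and let N ≥ 1 be an integer. Let f : ℂ → ℂ be holomorphic on the half-plane {z : Im z > c}, satisfy f(z + ℓ) = f(z) for all z with Im z > c, and be bounded near infinity in the sense that there exist M ≥ 0 and C ≥ c with ‖f z‖ ≤ M whenever Im z ≥ C. If the function z ↦ ‖f z‖² · (Im z)^(2N−2) is integrable over the half-strip {z : 0 < Re z < ℓ, Im z > c} with respect to the two-dimensional Lebesgue measure, then f tends to 0 as Im z → ∞, i.e. for every ε > 0 there exists A such that ‖f z‖ < ε for all z with Im z ≥ A. -/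
open MeasureTheory

/-- A half-strip has infinite area. -/
lemma strip_volume (ℓ A : ℝ) (hℓ : 0 < ℓ) :
    volume {z : ℂ | 0 < z.re ∧ z.re < ℓ ∧ A < z.im} = ⊤ := by
  have h : {z : ℂ | 0 < z.re ∧ z.re < ℓ ∧ A < z.im} =
      Complex.measurableEquivRealProd ⁻¹' (Set.Ioo 0 ℓ ×ˢ Set.Ioi A) := by
    ext z
    simp [Complex.measurableEquivRealProd_apply, and_assoc]
  rw [h, Complex.volume_preserving_equiv_real_prod.measure_preimage_equiv,
    Measure.volume_eq_prod, Measure.prod_prod, Real.volume_Ioo, Real.volume_Ioi]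
  apply ENNReal.mul_top
  simpa using hℓ

/-- A periodic holomorphic function on a half-plane which is bounded near infinity and whose
weighted L² norm with weight `(Im z)^(2N-2)`, `N ≥ 1`, is finite on a period half-strip,
tends to `0` as `Im z → ∞`. -/
theorem stmt_2 (ℓ c : ℝ) (hℓ : 0 < ℓ) (hc : 1 ≤ c) (N : ℕ) (hN : 1 ≤ N) (f : ℂ → ℂ)
    (hf : ∀ z : ℂ, c < z.im → DifferentiableAt ℂ f z)
    (hper : ∀ z : ℂ, c < z.im → f (z + (ℓ : ℂ)) = f z)
    (hbdd : ∃ M C : ℝ, 0 ≤ M ∧ c ≤ C ∧ ∀ z : ℂ, C ≤ z.im → ‖f z‖ ≤ M)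
    (hint : IntegrableOn (fun z : ℂ => ‖f z‖ ^ 2 * z.im ^ (2 * N - 2))
      {z : ℂ | 0 < z.re ∧ z.re < ℓ ∧ c < z.im} volume) :
    ∀ ε > 0, ∃ A : ℝ, ∀ z : ℂ, A ≤ z.im → ‖f z‖ < ε := by
  classical
  obtain ⟨M, C, hM, hcC, hb⟩ := hbdd
  set g : ℂ → ℂ := fun z => if c < z.im then f z else 0 with hg
  have hI : ∀ (a : ℝ), ∀ᶠ z : ℂ in Filter.comap Complex.im Filter.atTop, a < z.im := fun a =>
    (Filter.eventually_gt_atTop a).comap _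
  have hgper : Function.Periodic g (ℓ : ℂ) := by
    intro z
    by_cases h : c < z.im
    · simp [hg, h, hper z h]
    · simp [hg, h]
  have hgf : ∀ z : ℂ, c < z.im → g z = f z := fun z hz => by simp [hg, hz]
  have hgd : ∀ᶠ z in Filter.comap Complex.im Filter.atTop, DifferentiableAt ℂ g z := by
    filter_upwards [hI c] with z hz
    refine (hf z hz).congr_of_eventuallyEq ?_
    filter_upwards [(isOpen_lt continuous_const Complex.continuous_im).mem_nhds hz] with w hw
    exact hgf w hw
  have hgb : Filter.BoundedAtFilter (Filter.comap Complex.im Filter.atTop) g := by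
    refine Asymptotics.IsBigO.of_bound M ?_
    filter_upwards [hI C] with z hz
    rw [hgf z (by linarith)]
    simpa using hb z hz.le
  have ht := Function.Periodic.tendsto_at_I_inf hℓ hgper hgd hgb
  set L := Function.Periodic.cuspFunction ℓ g 0
  have key : ∀ ε > 0, ∃ A : ℝ, c < A ∧ ∀ z : ℂ, A ≤ z.im → ‖f z - L‖ < ε := by
    intro ε hε
    have h1 := Metric.tendsto_nhds.1 ht ε hε
    obtain ⟨s, hs, hs'⟩ := Filter.mem_comap.1 h1
    obtain ⟨a, ha⟩ := Filter.mem_atTop_sets.1 hs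
    refine ⟨max a (c + 1), lt_of_lt_of_le (by linarith) (le_max_right _ _), fun z hz => ?_⟩
    have h2 : dist (g z) L < ε := hs' (ha _ ((le_max_left _ _).trans hz))
    rw [hgf z (by linarith [(le_max_right a (c+1)).trans hz]), dist_eq_norm] at h2
    exact h2
  have hL : L = 0 := by
    by_contra hne
    have hpos : 0 < ‖L‖ := norm_pos_iff.2 hne
    obtain ⟨A, hcA, hA⟩ := key (‖L‖ / 2) (by positivity)
    have hms : MeasurableSet {z : ℂ | 0 < z.re ∧ z.re < ℓ ∧ A < z.im} :=
      ((measurableSet_lt measurable_const Complex.measurable_re).inter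
        ((measurableSet_lt Complex.measurable_re measurable_const).inter
          (measurableSet_lt measurable_const Complex.measurable_im)))
    have hint' := hint.mono_set (t := {z : ℂ | 0 < z.re ∧ z.re < ℓ ∧ c < z.im})
      (s := {z : ℂ | 0 < z.re ∧ z.re < ℓ ∧ A < z.im})
      (fun z hz => ⟨hz.1, hz.2.1, hcA.trans hz.2.2⟩)
    have hconst : IntegrableOn (fun _ : ℂ => (‖L‖ / 2) ^ 2)
        {z : ℂ | 0 < z.re ∧ z.re < ℓ ∧ A < z.im} volume := by
      refine Integrable.mono' hint' aestronglyMeasurable_const ?_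
      filter_upwards [ae_restrict_mem hms] with z hz
      have hzA : A < z.im := hz.2.2
      have h1 := hA z hzA.le
      have h2 : ‖L‖ ≤ ‖f z‖ + ‖f z - L‖ := by
        have := norm_sub_le (f z) (f z - L)
        simpa using this
      have h3 : (‖L‖ / 2) ^ 2 ≤ ‖f z‖ ^ 2 := by
        apply pow_le_pow_left₀ (by positivity); linarith
      have h4 : 1 ≤ z.im ^ (2 * N - 2) := one_le_pow₀ (by linarith)
      rw [Real.norm_of_nonneg (by positivity)]
      exact h3.trans (le_mul_of_one_le_right (by positivity) h4)
    rw [integrableOn_const_iff, strip_volume ℓ A hℓ] at hconst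
    simp [hne] at hconst
  intro ε hε
  obtain ⟨A, -, hA⟩ := key ε hε
  exact ⟨A, fun z hz => by simpa [hL] using hA z hz⟩
end

section
/- Let N ≥ 1 be an integer and let f be a modular form of weight 2N for the full modular group SL(2,ℤ). If the function z ↦ ‖f z‖² · (Im z)^(2N−2) is integrable over the standard fundamental domain 𝒟 = {z ∈ ℍ : 1 ≤ ‖z‖² and |Re z| ≤ 1/2} with respect to the two-dimensional Lebesgue measure dx dy induced from the inclusion ℍ ⊂ ℂ, then f is a cusp form, i.e. f(z) → 0 as Im z → ∞. -/
open MeasureTheory MatrixGroups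

/-- A modular form of weight `2N`, `N ≥ 1`, for `SL(2,ℤ)` which is square integrable against
the weight `(Im z)^(2N-2)` over the standard fundamental domain is a cusp form, i.e. it tends
to `0` as `Im z → ∞`. -/
theorem stmt_4 (N : ℕ) (hN : 1 ≤ N) (f : ModularForm (⊤ : Subgroup SL(2, ℤ)) (2 * N))
    (hint : IntegrableOn
      (fun z : ℂ =>
        if hz : 0 < z.im then ‖f ⟨z, hz⟩‖ ^ 2 * z.im ^ (2 * (N : ℤ) - 2) else 0)
      {z : ℂ | 0 < z.im ∧ 1 ≤ ‖z‖ ^ 2 ∧ |z.re| ≤ 1 / 2} volume) :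
    ∀ ε > 0, ∃ A : ℝ, ∀ z : UpperHalfPlane, A ≤ z.im → ‖f z‖ < ε := by
  classical
  have hΓ : (1 : ℝ) ∈
      (((⊤ : Subgroup SL(2, ℤ)) : Subgroup (GL (Fin 2) ℝ))).strictPeriods := by
    have h := one_mem_strictPeriods_SL
    rw [MonoidHom.range_eq_map] at h
    exact h
  have : Fact (IsCusp OnePoint.infty
      (((⊤ : Subgroup SL(2, ℤ)) : Subgroup (GL (Fin 2) ℝ)))) :=
    ⟨Subgroup.isCusp_of_mem_strictPeriods one_pos hΓ⟩
  have hO := UpperHalfPlane.exp_decay_sub_atImInfty one_pos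
    (SlashInvariantFormClass.periodic_comp_ofComplex f hΓ) (ModularFormClass.holo f)
    (ModularFormClass.bdd_at_infty f)
  set c := UpperHalfPlane.valueAtInfty f with hc
  have hlim : Filter.Tendsto (fun τ => f τ - c) UpperHalfPlane.atImInfty (nhds 0) := by
    refine hO.trans_tendsto ?_
    refine Real.tendsto_exp_atBot.comp ?_
    have h1 : Filter.Tendsto UpperHalfPlane.im UpperHalfPlane.atImInfty Filter.atTop :=
      Filter.tendsto_comap
    have h2 := h1.const_mul_atTop_of_neg (r := -2 * Real.pi) (by linarith [Real.pi_pos])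
    simpa using h2
  have key : ∀ ε > 0, ∃ A : ℝ, ∀ z : UpperHalfPlane, A ≤ z.im → ‖f z - c‖ < ε := by
    intro ε hε
    have := hlim.norm.eventually_lt_const (by simpa using hε : ‖(0 : ℂ)‖ < ε)
    exact (UpperHalfPlane.atImInfty_mem _).1 this
  have hc0 : c = 0 := by
    by_contra hne
    have hcp : 0 < ‖c‖ := norm_pos_iff.2 hne
    obtain ⟨A, hA⟩ := key (‖c‖ / 2) (by positivity)
    set B := max A 1 with hB
    have hB1 : 1 ≤ B := le_max_right _ _
    set S : Set ℂ := Complex.measurableEquivRealProd ⁻¹'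
      (Set.Icc (-(1 / 2) : ℝ) (1 / 2) ×ˢ Set.Ici B) with hS
    have hmem : ∀ z ∈ S, |z.re| ≤ 1 / 2 ∧ B ≤ z.im := by
      intro z hz
      have hz' : (-(1 / 2) ≤ z.re ∧ z.re ≤ 1 / 2) ∧ B ≤ z.im := hz
      exact ⟨abs_le.2 hz'.1, hz'.2⟩
    have hvol : volume S = ⊤ := by
      rw [hS, Complex.volume_preserving_equiv_real_prod.measure_preimage_equiv,
        Measure.volume_eq_prod, Measure.prod_prod, Real.volume_Icc, Real.volume_Ici]
      norm_num
    have hsub : S ⊆ {z : ℂ | 0 < z.im ∧ 1 ≤ ‖z‖ ^ 2 ∧ |z.re| ≤ 1 / 2} := by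
      intro z hz
      obtain ⟨h1, h2⟩ := hmem z hz
      refine ⟨by linarith, ?_, h1⟩
      rw [Complex.sq_norm, Complex.normSq_apply]
      nlinarith [mul_self_nonneg z.re]
    have hfin := Integrable.measure_norm_ge_lt_top (hint.mono_set hsub)
      (show 0 < (‖c‖ / 2) ^ 2 by positivity)
    have hle : volume S ≤ (volume.restrict S) {z : ℂ | (‖c‖ / 2) ^ 2 ≤
        ‖(if hz : 0 < z.im then ‖f ⟨z, hz⟩‖ ^ 2 * z.im ^ (2 * (N : ℤ) - 2) else 0 : ℝ)‖} := by
      rw [← Measure.restrict_apply_self volume S]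
      refine measure_mono ?_
      intro z hz
      obtain ⟨h1, h2⟩ := hmem z hz
      have him : 0 < z.im := by linarith
      simp only [Set.mem_setOf_eq, dif_pos him]
      have h3 := hA ⟨z, him⟩ ((le_max_left A 1).trans h2)
      have h4 : ‖c‖ / 2 ≤ ‖f ⟨z, him⟩‖ := by
        have := norm_sub_norm_le c (f ⟨z, him⟩)
        rw [norm_sub_rev] at this
        linarith
      have h5 : 1 ≤ z.im ^ (2 * (N : ℤ) - 2) := one_le_zpow₀ (by linarith) (by omega)
      rw [Real.norm_of_nonneg (by positivity)]
      calc (‖c‖ / 2) ^ 2 ≤ ‖f ⟨z, him⟩‖ ^ 2 := by gcongr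
        _ ≤ _ := le_mul_of_one_le_right (by positivity) h5
    rw [hvol] at hle
    exact absurd hfin (not_lt.2 hle)
  simpa [hc0] using key
end

section
/- Let N ≥ 1 be an integer, let P be a polynomial with complex coefficients of degree at most N − 1, let β ∈ ℝ and R ≥ 2. Then the function z ↦ ‖P(z)‖² · (1 + ‖z‖²)^(−N) · (Real.log(‖z‖²))^β · ‖z‖^(−2) is integrable on the set {z ∈ ℂ : ‖z‖ > R} with respect to the two-dimensional Lebesgue measure on ℂ. -/
open MeasureTheory

lemma aux_poly (n : ℕ) (P : Polynomial ℂ) (hP : P.natDegree < n + 1) (z : ℂ) (hz : 1 ≤ ‖z‖) :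
    ‖P.eval z‖ ≤ (∑ i ∈ Finset.range (n + 1), ‖P.coeff i‖) * ‖z‖ ^ n := by
  rw [Polynomial.eval_eq_sum_range' hP, Finset.sum_mul]
  refine (norm_sum_le _ _).trans (Finset.sum_le_sum fun i hi => ?_)
  rw [norm_mul, norm_pow]
  have : i ≤ n := by simpa [Nat.lt_succ_iff] using hi
  gcongr

lemma aux_log (β : ℝ) : ∃ K : ℝ, 0 ≤ K ∧ ∀ x : ℝ, 2 ≤ x → Real.log (x ^ 2) ^ β ≤ K * x := by
  have hb : 0 < |β| + 1 := by positivity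
  refine ⟨(2 * (|β| + 1)) ^ (|β| + 1), by positivity, fun x hx => ?_⟩
  have h1 : 1 ≤ Real.log (x ^ 2) := by
    have h2 : Real.log 2 ≤ Real.log x := Real.log_le_log (by norm_num) hx
    have := Real.log_two_gt_d9
    rw [Real.log_pow]; push_cast; linarith
  have hx0 : 0 ≤ x := by linarith
  have h3 := Real.log_le_rpow_div (x := x ^ 2) (by positivity)
    (ε := 1 / (2 * (|β| + 1))) (by positivity)
  calc Real.log (x ^ 2) ^ β ≤ Real.log (x ^ 2) ^ (|β| + 1) :=
        Real.rpow_le_rpow_of_exponent_le h1 (by linarith [le_abs_self β])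
    _ ≤ ((x ^ 2) ^ (1 / (2 * (|β| + 1))) / (1 / (2 * (|β| + 1)))) ^ (|β| + 1) :=
        Real.rpow_le_rpow (by linarith) h3 hb.le
    _ = (2 * (|β| + 1)) ^ (|β| + 1) * x := by
        rw [div_div_eq_mul_div, div_one, Real.mul_rpow (by positivity) (by positivity),
          ← Real.rpow_mul (by positivity), ← Real.rpow_natCast, ← Real.rpow_mul hx0, mul_comm]
        congr 1
        rw [show ((2 : ℕ) : ℝ) * (1 / (2 * (|β| + 1)) * (|β| + 1)) = 1 by
          push_cast; field_simp, Real.rpow_one]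

/-- Polynomials of degree at most `N-1`, viewed as sections of `O(N)` on `ℙ¹`, are square
integrable near infinity against the Poincaré-type part of the metric. -/
theorem stmt_6 (N : ℕ) (hN : 1 ≤ N) (P : Polynomial ℂ) (hP : P.degree ≤ (N - 1 : ℕ))
    (β : ℝ) (R : ℝ) (hR : 2 ≤ R) :
    IntegrableOn
      (fun z : ℂ => ‖P.eval z‖ ^ 2 * (1 + ‖z‖ ^ 2) ^ (-(N : ℤ)) *
        Real.log (‖z‖ ^ 2) ^ β * ‖z‖ ^ (-2 : ℤ))
      {z : ℂ | R < ‖z‖} volume := by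
  obtain ⟨n, rfl⟩ : ∃ n, N = n + 1 := ⟨N - 1, by omega⟩
  have hP' : P.natDegree < n + 1 := by
    have := Polynomial.natDegree_le_of_degree_le hP
    omega
  obtain ⟨K, hK, hlog⟩ := aux_log β
  set C := ∑ i ∈ Finset.range (n + 1), ‖P.coeff i‖ with hC
  have hint : Integrable (fun z : ℂ => (C ^ 2 * K * 8) * (1 + ‖z‖) ^ (-(3 : ℝ))) volume := by
    refine (integrable_one_add_norm ?_).const_mul _
    rw [Complex.finrank_real_complex]; norm_num
  have hm : Measurable (fun z : ℂ => P.eval z) := P.continuous.measurable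
  refine Integrable.mono' hint.integrableOn ?_ ?_
  · refine Measurable.aestronglyMeasurable ?_
    refine Measurable.mul (Measurable.mul (Measurable.mul ?_ ?_) ?_) ?_
    · exact hm.norm.pow_const 2
    · simp only [zpow_neg, zpow_natCast]
      fun_prop
    · fun_prop
    · simp only [zpow_neg]
      exact (measurable_norm.pow_const 2).inv
  · refine (ae_restrict_iff' (measurableSet_lt measurable_const measurable_norm)).2
      (Filter.Eventually.of_forall fun z hz => ?_)
    have hz2 : 2 ≤ ‖z‖ := hR.trans (le_of_lt hz)
    have hpz := aux_poly n P hP' z (by linarith)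
    have hl := hlog _ hz2
    rw [← hC] at hpz
    have hx0 : 0 < ‖z‖ := by linarith
    have hL0 : 0 ≤ Real.log (‖z‖ ^ 2) ^ β :=
      Real.rpow_nonneg (Real.log_nonneg (by nlinarith)) _
    rw [Real.norm_of_nonneg (by positivity)]
    have h1 : ((1 : ℝ) + ‖z‖ ^ 2) ^ (-((n + 1 : ℕ) : ℤ)) ≤ ((‖z‖ ^ 2) ^ (n + 1))⁻¹ := by
      rw [zpow_neg, zpow_natCast]
      gcongr
      linarith
    have h2 : (‖z‖ ^ 3)⁻¹ ≤ 8 * (1 + ‖z‖) ^ (-(3 : ℝ)) := by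
      rw [Real.rpow_neg (by positivity), show (3 : ℝ) = ((3 : ℕ) : ℝ) by norm_num,
        Real.rpow_natCast, ← div_eq_mul_inv, inv_eq_one_div,
        div_le_div_iff₀ (by positivity) (by positivity)]
      calc 1 * (1 + ‖z‖) ^ 3 ≤ (2 * ‖z‖) ^ 3 := by
            rw [one_mul]; gcongr; linarith
        _ = 8 * ‖z‖ ^ 3 := by ring
    calc ‖P.eval z‖ ^ 2 * (1 + ‖z‖ ^ 2) ^ (-((n + 1 : ℕ) : ℤ)) *
          Real.log (‖z‖ ^ 2) ^ β * ‖z‖ ^ (-2 : ℤ)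
        ≤ (C * ‖z‖ ^ n) ^ 2 * ((‖z‖ ^ 2) ^ (n + 1))⁻¹ * (K * ‖z‖) * ‖z‖ ^ (-2 : ℤ) := by
          gcongr
      _ = C ^ 2 * K * (‖z‖ ^ 3)⁻¹ := by
          rw [zpow_neg, show ((2 : ℤ)) = ((2 : ℕ) : ℤ) by norm_num, zpow_natCast]
          field_simp
          ring
      _ ≤ C ^ 2 * K * (8 * (1 + ‖z‖) ^ (-(3 : ℝ))) := by gcongr
      _ = _ := by ring
end

section
/- Let N ≥ 1 be an integer, let P be a polynomial with complex coefficients of degree exactly N, let α ≥ −1 be a real number and R ≥ 2. Then the function z ↦ ‖P(z)‖² · (1 + ‖z‖²)^(−N) · (Real.log(‖z‖²))^α · ‖z‖^(−2) is NOT integrable on the set {z ∈ ℂ : ‖z‖ > R} with respect to the two-dimensional Lebesgue measure on ℂ. -/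
open MeasureTheory

lemma aux_radial (S : ℝ) :
    ¬ Integrable (fun z : ℂ =>
      (Set.Ioi S).indicator (fun r : ℝ => (Real.log r)⁻¹ * (r ^ 2)⁻¹) ‖z‖) volume := by
  rw [integrable_fun_norm_addHaar (μ := (volume : Measure ℂ))
    (f := (Set.Ioi S).indicator (fun r : ℝ => (Real.log r)⁻¹ * (r ^ 2)⁻¹))]
  have A : ∀ᶠ x : ℝ in Filter.atTop,
      HasDerivAt (fun x => Real.log (Real.log x)) (x⁻¹ / Real.log x) x := by
    filter_upwards [Filter.Ioi_mem_atTop 1] with x hx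
    have hx' : (1 : ℝ) < x := hx
    exact (Real.hasDerivAt_log (by linarith)).log (Real.log_pos hx').ne'
  have B : Filter.Tendsto (fun x => ‖Real.log (Real.log x)‖) Filter.atTop Filter.atTop :=
    tendsto_norm_atTop_atTop.comp (Real.tendsto_log_atTop.comp Real.tendsto_log_atTop)
  refine not_integrableOn_of_tendsto_norm_atTop_of_deriv_isBigO_filter Filter.atTop
    (Filter.Ioi_mem_atTop 0) (A.mono (fun x hx ↦ hx.differentiableAt)) B
    (Filter.EventuallyEq.isBigO ?_)
  filter_upwards [A, Filter.Ioi_mem_atTop S, Filter.Ioi_mem_atTop 1] with x hx hS h1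
  have hx1 : (1 : ℝ) < x := h1
  have hl := Real.log_pos hx1
  rw [hx.deriv, Set.indicator_of_mem hS, Complex.finrank_real_complex]
  simp only [smul_eq_mul]
  have : x ≠ 0 := by linarith
  field_simp
  try norm_num

lemma aux_poly_s8 (P : Polynomial ℂ) (hP : P ≠ 0) :
    ∃ c > 0, ∃ S : ℝ, ∀ z : ℂ, S ≤ ‖z‖ → c * ‖z‖ ^ P.natDegree ≤ ‖P.eval z‖ := by
  obtain ⟨C, hC, h⟩ :=
    (Polynomial.isEquivalent_cobounded_leading_monomial (P := P)).isBigO_symm.exists_pos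
  have h := h.bound
  rw [← comap_norm_atTop, Filter.eventually_comap, Filter.eventually_atTop] at h
  obtain ⟨S, hS⟩ := h
  have hl : 0 < ‖P.leadingCoeff‖ := by simpa using hP
  refine ⟨‖P.leadingCoeff‖ / C, by positivity, S, fun z hz => ?_⟩
  have := hS _ hz z rfl
  rw [norm_mul, norm_pow] at this
  rw [div_mul_eq_mul_div, div_le_iff₀ hC]
  linarith

/-- Polynomials of degree exactly `N` fail to be square integrable near infinity for the
generalized Poincaré metric, for any exponent `α ≥ -1` of the logarithmic factor. -/
theorem stmt_8 (N : ℕ) (hN : 1 ≤ N) (P : Polynomial ℂ) (hP : P.degree = (N : ℕ))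
    (α : ℝ) (hα : -1 ≤ α) (R : ℝ) (hR : 2 ≤ R) :
    ¬ IntegrableOn
      (fun z : ℂ => ‖P.eval z‖ ^ 2 * (1 + ‖z‖ ^ 2) ^ (-(N : ℤ)) *
        Real.log (‖z‖ ^ 2) ^ α * ‖z‖ ^ (-2 : ℤ))
      {z : ℂ | R < ‖z‖} volume := by
  intro hI
  have hP0 : P ≠ 0 := by
    rintro rfl
    simp at hP
  have hd : P.natDegree = N := Polynomial.natDegree_eq_of_degree_eq_some hP
  obtain ⟨c, hc, S₀, hS₀⟩ := aux_poly_s8 P hP0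
  rw [hd] at hS₀
  set S := max R S₀ with hS
  have hms : ∀ T : ℝ, MeasurableSet {z : ℂ | T < ‖z‖} := fun T =>
    measurableSet_lt measurable_const measurable_norm
  have hI2 := hI.mono_set (t := {z : ℂ | R < ‖z‖}) (s := {z : ℂ | S < ‖z‖})
    (fun z (hz : S < ‖z‖) => lt_of_le_of_lt (le_max_left _ _) hz)
  have hI3 := (integrable_indicator_iff (hms S)).2 (hI2.const_mul (2 * 2 ^ N / c ^ 2))
  refine aux_radial S (hI3.mono' ?_ ?_)
  · refine Measurable.aestronglyMeasurable ?_
    refine Measurable.comp (Measurable.indicator ?_ measurableSet_Ioi) measurable_norm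
    fun_prop
  · refine Filter.Eventually.of_forall fun z => ?_
    by_cases hz : S < ‖z‖
    swap
    · rw [Set.indicator_of_notMem (by simpa using hz), Set.indicator_of_notMem (by simpa using hz)]
      simp
    rw [Set.indicator_of_mem (by simpa using hz), Set.indicator_of_mem (by simpa using hz)]
    have h2 : 2 < ‖z‖ := lt_of_le_of_lt (hR.trans (le_max_left _ _)) hz
    have hp := hS₀ z ((le_max_right _ _).trans hz.le)
    generalize ‖P.eval z‖ = p at *
    generalize ‖z‖ = r at *
    have hr : 0 < r := by linarith
    have hlog : 0 < Real.log r := Real.log_pos (by linarith)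
    have hl1 : 1 ≤ Real.log (r ^ 2) := by
      rw [Real.le_log_iff_exp_le (by positivity)]
      nlinarith [Real.exp_one_lt_d9]
    have e1 : (2 * Real.log r)⁻¹ ≤ Real.log (r ^ 2) ^ α := by
      have := Real.rpow_le_rpow_of_exponent_le hl1 hα
      rw [Real.rpow_neg_one] at this
      simpa [Real.log_pow] using this
    have e2 : c ^ 2 / 2 ^ N ≤ p ^ 2 * (1 + r ^ 2) ^ (-(N : ℤ)) := by
      rw [zpow_neg, zpow_natCast, ← div_eq_mul_inv, div_le_div_iff₀ (by positivity) (by positivity)]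
      have a1 : (1 + r ^ 2) ^ N ≤ (2 * r ^ 2) ^ N := by
        gcongr
        nlinarith
      have a2 : (c * r ^ N) ^ 2 ≤ p ^ 2 := by gcongr
      calc c ^ 2 * (1 + r ^ 2) ^ N ≤ c ^ 2 * (2 * r ^ 2) ^ N := by gcongr
        _ = (c * r ^ N) ^ 2 * 2 ^ N := by ring
        _ ≤ _ := by gcongr
    have e3 : r ^ (-2 : ℤ) = (r ^ 2)⁻¹ := by
      rw [zpow_neg]; norm_cast
    rw [e3, Real.norm_of_nonneg (by positivity)]
    calc (Real.log r)⁻¹ * (r ^ 2)⁻¹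
        = (2 * 2 ^ N / c ^ 2) * ((c ^ 2 / 2 ^ N) * (2 * Real.log r)⁻¹ * (r ^ 2)⁻¹) := by
          field_simp
      _ ≤ _ := by gcongr
end
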